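/- For every integer e ≥ 5, there exists a finite metabelian group U of order 3^{e+8}, generated by two elements x and y satisfying x^{3^{e+1}} = 1, y^3 = s₃ s₄^2, s₂^3 = s₄ t₄^2, s₃^3 = s₅, t₃^3 = s₅^2, [x^3, y] = s₄ t₄ s₅^2, [x^3, s₂] = s₅, and t₅ = s₅, whose abelianization is isomorphic to (ZMod (3^{e+1})) × (ZMod 3). -/

import Mathlib

/-- The commutator `[a,b] = a⁻¹ * b⁻¹ * a * b`. -/
def comm' {G : Type*} [Group G] (a b : G) : G := a⁻¹ * b⁻¹ * a * b

/-- `s₂ = [y,x]` and `s_j = [s_(j-1), x]` for `j ≥ 3`. -/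
def sgen {G : Type*} [Group G] (x y : G) : ℕ → G
  | 0 => 1
  | 1 => 1
  | 2 => comm' y x
  | (n + 3) => comm' (sgen x y (n + 2)) x

/-- `t_j = [s_(j-1), y]` for `j ≥ 3`. -/
def tgenD {G : Type*} [Group G] (x y : G) (j : ℕ) : G := comm' (sgen x y (j - 1)) y

/-- `t₂ = [y,x]` and `t_j = [t_(j-1), y]` for `j ≥ 3`. -/
def tgenB {G : Type*} [Group G] (x y : G) : ℕ → G
  | 0 => 1
  | 1 => 1
  | 2 => comm' y x
  | (n + 3) => comm' (tgenB x y (n + 2)) y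

/-- A σ-group: a group admitting an automorphism acting as inversion on the
abelianization. -/
def IsSigmaGroup (G : Type*) [Group G] : Prop :=
  ∃ σ : G ≃* G, ∀ g : G, Abelianization.of (σ g) = (Abelianization.of g)⁻¹

/-- A group is metabelian if its commutator subgroup is abelian, i.e. the second
derived subgroup is trivial. -/
def IsMetabelian (G : Type*) [Group G] : Prop := derivedSeries G 2 = ⊥

/-! The commutator subgroup of the group is a cyclic module, generated by `[y, x]`, over the
commutative ring `R` in which `X` and `Y` stand for commutation with `x` and `y`. The relations
identify `R` with `ℤ[X, Y] / (X * Y, X ^ 2 - Y ^ 2 - 3, 3 * (X + Y))`, a ring of order `3 ^ 6`.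
Conversely the group is rebuilt from `R` by two successive Hölder extensions: adjoin `y` with
`y ^ 3 = X + 2 * X ^ 2` in `R`, acting as `1 + Y`, then `x` with `x ^ (3 ^ (e + 1)) = 1`, acting on
`R` as `1 + X` and sending `y` to `y * [y, x]`. The compatibility conditions are statements about
the geometric sums of `1 + X` and `1 + Y`, and every relation to be checked becomes an identity in
`R`. -/

/-- Hölder's data for an extension of a group `N` by a cyclic group of order `m`: for a lift `g` of
a generator, `act` is `a ↦ g⁻¹ * a * g` and `power` is `g ^ m`. The last field forces `act` to be
bijective. -/
structure CyclicExtensionData (N : Type*) [Group N] (m : ℕ) where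
  act : N →* N
  power : N
  act_power : act power = power
  act_iterate_apply : ∀ a, act^[m] a = power⁻¹ * a * power

/-- The cyclic extension defined by `D`; the pair `(i, a)` stands for the product `g ^ i * a`, where
`i` is read as a natural number less than `m`. -/
@[ext] structure CyclicExtension {N : Type*} [Group N] {m : ℕ} (D : CyclicExtensionData N m) where
  exponent : ZMod m
  base : N

namespace CyclicExtension

variable {N : Type*} [Group N] {m : ℕ} {D : CyclicExtensionData N m}

theorem card_eq : Nat.card (CyclicExtension D) = m * Nat.card N := by
  let e : CyclicExtension D ≃ ZMod m × N :=
    ⟨fun g => (g.exponent, g.base), fun p => ⟨p.1, p.2⟩, fun _ => rfl, fun _ => rfl⟩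
  rw [Nat.card_congr e, Nat.card_prod, Nat.card_zmod]

/-- The normal form of `g ^ k * a` for an arbitrary exponent `k`, obtained by collecting the full
`m`-th powers of `g` into the base. -/
def ofNat (k : ℕ) (a : N) : CyclicExtension D :=
  ⟨k, D.power ^ (k / m) * a⟩

instance : One (CyclicExtension D) := ⟨ofNat 0 1⟩

instance : Mul (CyclicExtension D) :=
  ⟨fun g h => ofNat (g.exponent.val + h.exponent.val) (D.act^[h.exponent.val] g.base * h.base)⟩

instance : Inv (CyclicExtension D) :=
  ⟨fun g => ofNat (m - g.exponent.val) ((D.act^[m - g.exponent.val] g.base)⁻¹ * D.power⁻¹)⟩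

theorem mul_def (g h : CyclicExtension D) :
    g * h = ofNat (g.exponent.val + h.exponent.val)
      (D.act^[h.exponent.val] g.base * h.base) := rfl

theorem inv_def (g : CyclicExtension D) :
    g⁻¹ = ofNat (m - g.exponent.val) ((D.act^[m - g.exponent.val] g.base)⁻¹ * D.power⁻¹) := rfl

theorem act_iterate_power (k : ℕ) : D.act^[k] D.power = D.power :=
  Function.iterate_fixed D.act_power k

theorem act_iterate_mul_apply (k : ℕ) (a : N) :
    D.act^[m * k] a = (D.power ^ k)⁻¹ * a * D.power ^ k := by
  induction k with
  | zero => simp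
  | succ k ih =>
    rw [Nat.mul_succ, Nat.add_comm, Function.iterate_add_apply, ih, D.act_iterate_apply]
    group

theorem power_pow_mul_act_iterate (l : ℕ) (a : N) :
    D.power ^ (l / m) * D.act^[l] a = D.act^[l % m] a * D.power ^ (l / m) := by
  conv_lhs =>
    rw [← Nat.mod_add_div l m, Nat.add_comm, Function.iterate_add_apply, act_iterate_mul_apply,
      Nat.add_comm, Nat.mod_add_div]
  group

section lift

variable {H : Type*} [Group H] (f : N →* H) (h : H)

theorem map_mul_pow_eq (hact : ∀ a, f a * h = h * f (D.act a)) (k : ℕ) (a : N) :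
    f a * h ^ k = h ^ k * f (D.act^[k] a) := by
  induction k generalizing a with
  | zero => simp
  | succ k ih =>
    rw [pow_succ', ← mul_assoc, hact, mul_assoc, ih, ← mul_assoc, Function.iterate_succ_apply]

theorem pow_mul_map_ofNat (hpow : h ^ m = f D.power) (k : ℕ) (a : N) :
    h ^ (ofNat k a : CyclicExtension D).exponent.val * f (ofNat k a : CyclicExtension D).base =
      h ^ k * f a := by
  conv_rhs => rw [← Nat.mod_add_div k m, pow_add, pow_mul, hpow]
  simp only [ofNat, ZMod.val_natCast, map_mul, map_pow, mul_assoc]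

end lift

variable [NeZero m]

theorem ofNat_add_mul (k l : ℕ) (a : N) :
    (ofNat (k + m * l) a : CyclicExtension D) = ofNat k (D.power ^ l * a) := by
  ext
  · simp [ofNat]
  · simp only [ofNat, Nat.add_mul_div_left _ _ (NeZero.pos m), pow_add, mul_assoc]

theorem ofNat_exponent_val (g : CyclicExtension D) : ofNat g.exponent.val g.base = g := by
  ext
  · exact ZMod.natCast_zmod_val _
  · simp [ofNat, Nat.div_eq_of_lt (ZMod.val_lt g.exponent)]

theorem ofNat_mul_ofNat (k l : ℕ) (a b : N) :
    (ofNat k a * ofNat l b : CyclicExtension D) = ofNat (k + l) (D.act^[l] a * b) := by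
  have carry : k + l = k % m + l % m + m * (k / m + l / m) := by
    rw [mul_add]
    linarith [Nat.mod_add_div k m, Nat.mod_add_div l m]
  rw [carry, ofNat_add_mul, mul_def]
  simp only [ofNat, ZMod.val_natCast, iterate_map_mul, iterate_map_pow, act_iterate_power]
  rw [pow_add, mul_assoc _ (D.power ^ (l / m)), ← mul_assoc (D.power ^ (l / m)),
    power_pow_mul_act_iterate]
  simp only [mul_assoc]

instance : Group (CyclicExtension D) :=
  Group.ofRightAxioms
    (fun f g h => by
      rw [← ofNat_exponent_val f, ← ofNat_exponent_val g, ← ofNat_exponent_val h]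
      simp only [ofNat_mul_ofNat, iterate_map_mul, ← Function.iterate_add_apply, add_assoc,
        mul_assoc, Nat.add_comm h.exponent.val])
    (fun g => by
      rw [← ofNat_exponent_val g]
      exact (ofNat_mul_ofNat _ _ _ _).trans (by simp))
    (fun g => by
      have full : g.exponent.val + (m - g.exponent.val) = 0 + m * 1 := by
        have := ZMod.val_lt g.exponent
        lia
      nth_rw 1 [← ofNat_exponent_val g]
      rw [inv_def, ofNat_mul_ofNat, full, ofNat_add_mul, mul_inv_cancel_left, pow_one,
        mul_inv_cancel]
      rfl)

/-- The inclusion of the base group. -/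
def inl : N →* CyclicExtension D where
  toFun := ofNat 0
  map_one' := rfl
  map_mul' a b := by rw [ofNat_mul_ofNat]; rfl

/-- The distinguished lift `g` of a generator of the cyclic quotient. -/
def gen : CyclicExtension D := ofNat 1 1

theorem inl_apply (a : N) : (inl a : CyclicExtension D) = ofNat 0 a := rfl

theorem inl_mul_gen (a : N) : inl a * gen = gen * (inl (D.act a) : CyclicExtension D) := by
  simp only [inl_apply, gen, ofNat_mul_ofNat, Function.iterate_one, Function.iterate_zero_apply,
    zero_add, add_zero, one_mul, mul_one]

theorem inl_mul_gen_pow (k : ℕ) (a : N) :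
    inl a * gen ^ k = gen ^ k * (inl (D.act^[k] a) : CyclicExtension D) :=
  map_mul_pow_eq inl gen inl_mul_gen k a

theorem gen_pow_mul_inl (k : ℕ) (a : N) : gen ^ k * inl a = (ofNat k a : CyclicExtension D) := by
  induction k generalizing a with
  | zero => rw [pow_zero, one_mul, inl_apply]
  | succ k ih => rw [pow_succ', mul_assoc, ih, gen, ofNat_mul_ofNat, iterate_map_one, one_mul,
      Nat.add_comm]

theorem gen_pow_mul_inl_eq (g : CyclicExtension D) : gen ^ g.exponent.val * inl g.base = g := by
  rw [gen_pow_mul_inl, ofNat_exponent_val]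

theorem gen_pow_eq : (gen : CyclicExtension D) ^ m = inl D.power := by
  have full := ofNat_add_mul (D := D) 0 1 1
  rwa [zero_add, mul_one, pow_one, mul_one, ← gen_pow_mul_inl, map_one, mul_one] at full

theorem comm'_inl_gen (a : N) :
    comm' (inl a) gen = (inl (a⁻¹ * D.act a) : CyclicExtension D) := by
  rw [comm', mul_assoc, inl_mul_gen, map_mul, map_inv]
  group

theorem comm'_gen_pow_inl (k : ℕ) (a : N) :
    comm' (gen ^ k) (inl a) = (inl ((D.act^[k] a)⁻¹ * a) : CyclicExtension D) := by
  rw [comm', mul_assoc _ _ (gen ^ k), ← map_inv, inl_mul_gen_pow, iterate_map_inv, map_mul]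
  group

section lift

variable {H : Type*} [Group H]

/-- The homomorphism that is `f` on the base group and sends `gen` to `h`. -/
def lift (f : N →* H) (h : H) (hact : ∀ a, f a * h = h * f (D.act a)) (hpow : h ^ m = f D.power) :
    CyclicExtension D →* H :=
  MonoidHom.mk' (fun g => h ^ g.exponent.val * f g.base) fun g₁ g₂ => by
    rw [mul_def, pow_mul_map_ofNat f h hpow, map_mul, pow_add, mul_assoc, ← mul_assoc _ _ (f _),
      ← map_mul_pow_eq f h hact]
    simp only [mul_assoc]

variable (f : N →* H) (h : H) (hact : ∀ a, f a * h = h * f (D.act a)) (hpow : h ^ m = f D.power)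

theorem lift_apply (g : CyclicExtension D) :
    lift f h hact hpow g = h ^ g.exponent.val * f g.base := rfl

@[simp] theorem lift_inl (a : N) : lift f h hact hpow (inl a) = f a := by
  rw [lift_apply, inl_apply, pow_mul_map_ofNat f h hpow, pow_zero, one_mul]

@[simp] theorem lift_gen : lift f h hact hpow gen = h := by
  rw [lift_apply, gen, pow_mul_map_ofNat f h hpow, pow_one, map_one, mul_one]

end lift

theorem hom_ext {H : Type*} [Group H] {f₁ f₂ : CyclicExtension D →* H}
    (hinl : ∀ a, f₁ (inl a) = f₂ (inl a)) (hgen : f₁ gen = f₂ gen) : f₁ = f₂ := by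
  ext g
  rw [← gen_pow_mul_inl_eq g]
  simp only [map_mul, map_pow, hinl, hgen]

end CyclicExtension

theorem map_comm' {G H : Type*} [Group G] [Group H] (f : G →* H) (a b : G) :
    f (comm' a b) = comm' (f a) (f b) := by
  simp only [comm', map_mul, map_inv]

theorem comm'_mem {G : Type*} [Group G] {H : Subgroup G} {a b : G} (ha : a ∈ H) (hb : b ∈ H) :
    comm' a b ∈ H :=
  H.mul_mem (H.mul_mem (H.mul_mem (H.inv_mem ha) (H.inv_mem hb)) ha) hb

theorem comm'_mem_commutator {G : Type*} [Group G] (a b : G) : comm' a b ∈ commutator G := by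
  have h := Subgroup.commutator_mem_commutator (Subgroup.mem_top a⁻¹) (Subgroup.mem_top b⁻¹)
  rwa [commutatorElement_def, inv_inv, inv_inv] at h

open Finset Multiplicative CyclicExtension

theorem geom_sum_dvd_geom_sum {R : Type*} [Semiring R] (r : R) {m n : ℕ} (h : m ∣ n) :
    ∑ i ∈ range m, r ^ i ∣ ∑ i ∈ range n, r ^ i := by
  obtain ⟨k, rfl⟩ := h
  induction k with
  | zero => simp
  | succ k ih =>
    rw [Nat.mul_succ, sum_range_add]
    simp only [add_comm (m * k), pow_add, ← sum_mul]
    exact dvd_add ih (dvd_mul_right _ _)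

/-- Multiplication by `r` as an endomorphism of the additive group of `R`, written
multiplicatively. -/
def mulLeftHom {R : Type*} [Semiring R] (r : R) : Multiplicative R →* Multiplicative R :=
  AddMonoidHom.toMultiplicative (AddMonoidHom.mulLeft r)

theorem mulLeftHom_ofAdd {R : Type*} [Semiring R] (r a : R) :
    mulLeftHom r (ofAdd a) = ofAdd (r * a) := rfl

theorem mulLeftHom_iterate_ofAdd {R : Type*} [Semiring R] (r a : R) (k : ℕ) :
    (mulLeftHom r)^[k] (ofAdd a) = ofAdd (r ^ k * a) := by
  induction k with
  | zero => simp
  | succ k ih => rw [Function.iterate_succ_apply', ih, mulLeftHom_ofAdd, pow_succ', mul_assoc]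

/-- Data for a metabelian group with generators `x` and `y` in which `[y, x]` is the element `1` of
the abelian normal subgroup `R`, on which commutation with `x` and `y` is multiplication by `X` and
`Y`, while `x ^ n = 1` and `y ^ m = z`. The axioms express that `z` commutes with `y`, that
`[y ^ m, x] = [z, x]`, and that `[y, x ^ n] = 1`. -/
structure BicyclicData (R : Type*) [CommRing R] (m n : ℕ) where
  X : R
  Y : R
  z : R
  Y_mul_z : Y * z = 0
  geom_sum_Y : ∑ i ∈ range m, (1 + Y) ^ i = X * z
  geom_sum_X : ∑ i ∈ range n, (1 + X) ^ i = 0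

namespace BicyclicData

variable {R : Type*} [CommRing R] {m n : ℕ} (D : BicyclicData R m n)

theorem one_add_Y_pow : (1 + D.Y) ^ m = 1 := by
  have h := mul_geom_sum (1 + D.Y) m
  rw [D.geom_sum_Y] at h
  linear_combination -h + D.X * D.Y_mul_z

theorem one_add_X_pow : (1 + D.X) ^ n = 1 := by
  have h := mul_geom_sum (1 + D.X) n
  rw [D.geom_sum_X] at h
  linear_combination -h

/-- The extension of `R` by `y`. -/
def innerData : CyclicExtensionData (Multiplicative R) m where
  act := mulLeftHom (1 + D.Y)
  power := ofAdd D.z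
  act_power := by rw [mulLeftHom_ofAdd, add_mul, D.Y_mul_z, one_mul, add_zero]
  act_iterate_apply a := by
    rw [← ofAdd_toAdd a, mulLeftHom_iterate_ofAdd, D.one_add_Y_pow, one_mul, mul_right_comm,
      inv_mul_cancel, one_mul]

theorem innerData_act : D.innerData.act = mulLeftHom (1 + D.Y) := rfl

theorem innerData_power : D.innerData.power = ofAdd D.z := rfl

/-- The normal closure of `y` in the metabelian group defined by `D`. -/
abbrev Inner : Type _ := CyclicExtension D.innerData

variable [NeZero m]

theorem Inner.inl_mul_gen (a : R) :
    (inl (ofAdd a) * gen : D.Inner) = gen * inl (ofAdd ((1 + D.Y) * a)) :=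
  CyclicExtension.inl_mul_gen (D := D.innerData) (ofAdd a)

theorem Inner.gen_mul_inl_pow (k : ℕ) (a : R) :
    (gen * inl (ofAdd a) : D.Inner) ^ k =
      gen ^ k * inl (ofAdd ((∑ i ∈ range k, (1 + D.Y) ^ i) * a)) := by
  induction k with
  | zero => simp
  | succ k ih =>
    rw [pow_succ, ih, mul_assoc, ← mul_assoc _ gen, Inner.inl_mul_gen, pow_succ, mul_assoc,
      mul_assoc, ← map_mul, ← ofAdd_add, geom_sum_succ]
    congr 4
    ring

/-- Conjugation by `x` on the normal closure of `y`: it multiplies `R` by `1 + X` and sends `y` to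
`y * [y, x]`. -/
def shift : D.Inner →* D.Inner :=
  lift (inl.comp (mulLeftHom (1 + D.X))) (gen * inl (ofAdd 1))
    (fun a => by
      rw [← ofAdd_toAdd a, innerData_act, MonoidHom.comp_apply, MonoidHom.comp_apply,
        mulLeftHom_ofAdd, mulLeftHom_ofAdd, mulLeftHom_ofAdd, ← mul_assoc, Inner.inl_mul_gen,
        mul_assoc, mul_assoc, ← map_mul inl, ← map_mul inl, mul_comm (ofAdd 1), mul_left_comm])
    (by
      rw [Inner.gen_mul_inl_pow, gen_pow_eq, innerData_power, MonoidHom.comp_apply,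
        mulLeftHom_ofAdd, ← map_mul, ← ofAdd_add, D.geom_sum_Y]
      congr 2
      ring)

theorem shift_inl (a : R) : D.shift (inl (ofAdd a)) = inl (ofAdd ((1 + D.X) * a)) :=
  lift_inl ..

theorem shift_gen : D.shift gen = gen * inl (ofAdd 1) :=
  lift_gen ..

theorem shift_iterate_inl (k : ℕ) (a : R) :
    D.shift^[k] (inl (ofAdd a)) = inl (ofAdd ((1 + D.X) ^ k * a)) := by
  induction k with
  | zero => simp
  | succ k ih => rw [Function.iterate_succ_apply', ih, shift_inl, pow_succ', mul_assoc]

theorem shift_iterate_gen (k : ℕ) :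
    D.shift^[k] gen = gen * inl (ofAdd (∑ i ∈ range k, (1 + D.X) ^ i)) := by
  induction k with
  | zero => simp
  | succ k ih =>
    rw [Function.iterate_succ_apply', ih, map_mul, shift_gen, shift_inl, mul_assoc, ← map_mul,
      ← ofAdd_add, geom_sum_succ, add_comm]

theorem shift_iterate_apply (b : D.Inner) : D.shift^[n] b = b := by
  rw [← gen_pow_mul_inl_eq b, ← ofAdd_toAdd b.base, iterate_map_mul, iterate_map_pow,
    shift_iterate_gen, shift_iterate_inl, D.geom_sum_X, D.one_add_X_pow, ofAdd_zero, map_one,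
    mul_one, one_mul]

/-- The exponent of `y` on the normal closure of `y`, as the second coordinate. -/
def innerExponent : D.Inner →* Multiplicative (ZMod n × ZMod m) :=
  lift 1 (ofAdd (0, 1)) (by simp) (by simp [← ofAdd_nsmul])

theorem innerExponent_shift (b : D.Inner) : D.innerExponent (D.shift b) = D.innerExponent b := by
  suffices h : D.innerExponent.comp D.shift = D.innerExponent from DFunLike.congr_fun h b
  refine hom_ext (fun a => ?_) ?_
  · rw [← ofAdd_toAdd a, MonoidHom.comp_apply, shift_inl, innerExponent, lift_inl, lift_inl]
    rfl
  · rw [MonoidHom.comp_apply, shift_gen, map_mul, innerExponent, lift_inl]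
    exact mul_one _

/-- The split extension of the normal closure of `y` by `x`. -/
def outerData : CyclicExtensionData D.Inner n where
  act := D.shift
  power := 1
  act_power := map_one _
  act_iterate_apply b := by rw [D.shift_iterate_apply, inv_one, one_mul, mul_one]

theorem outerData_act : D.outerData.act = D.shift := rfl

theorem outerData_power : D.outerData.power = 1 := rfl

/-- The metabelian group defined by `D`. -/
abbrev Total : Type _ := CyclicExtension D.outerData

theorem card_total : Nat.card D.Total = n * (m * Nat.card R) := by
  rw [card_eq, card_eq]
  rfl

variable [NeZero n]

/-- The first generator. -/
def x : D.Total := gen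

/-- The second generator. -/
def y : D.Total := inl gen

/-- The inclusion of the additive group of `R`. -/
def incl : Multiplicative R →* D.Total := inl.comp inl

theorem incl_apply (a : Multiplicative R) : D.incl a = inl (inl a) := rfl

theorem x_pow : D.x ^ n = 1 := by
  rw [x, gen_pow_eq, outerData_power, map_one]

theorem y_pow : D.y ^ m = D.incl (ofAdd D.z) := by
  rw [y, ← map_pow, gen_pow_eq, innerData_power, incl_apply]

theorem exists_eq_mul (g : D.Total) :
    ∃ a, g = D.x ^ g.exponent.val * (D.y ^ g.base.exponent.val * D.incl (ofAdd a)) :=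
  ⟨g.base.base.toAdd, by
    rw [y, incl_apply, ofAdd_toAdd, ← map_pow, ← map_mul, gen_pow_mul_inl_eq, x,
      gen_pow_mul_inl_eq]⟩

theorem comm'_incl_x (a : R) : comm' (D.incl (ofAdd a)) D.x = D.incl (ofAdd (D.X * a)) := by
  rw [incl_apply, x, comm'_inl_gen, outerData_act, shift_inl, ← map_inv, ← map_mul, ← ofAdd_neg,
    ← ofAdd_add, incl_apply]
  congr 3
  ring

theorem comm'_incl_y (a : R) : comm' (D.incl (ofAdd a)) D.y = D.incl (ofAdd (D.Y * a)) := by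
  rw [incl_apply, y, ← map_comm', comm'_inl_gen, innerData_act, mulLeftHom_ofAdd, ← ofAdd_neg,
    ← ofAdd_add, incl_apply]
  congr 3
  ring

theorem comm'_y_x : comm' D.y D.x = D.incl (ofAdd 1) := by
  rw [y, x, comm'_inl_gen, outerData_act, shift_gen, inv_mul_cancel_left, incl_apply]

theorem comm'_x_pow_incl (k : ℕ) (a : R) :
    comm' (D.x ^ k) (D.incl (ofAdd a)) = D.incl (ofAdd ((1 - (1 + D.X) ^ k) * a)) := by
  rw [x, incl_apply, comm'_gen_pow_inl, outerData_act, shift_iterate_inl, ← map_inv, ← map_mul,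
    ← ofAdd_neg, ← ofAdd_add, incl_apply]
  congr 3
  ring

theorem comm'_x_pow_y (k : ℕ) :
    comm' (D.x ^ k) D.y = D.incl (ofAdd (-∑ i ∈ range k, (1 + D.X) ^ i)) := by
  rw [x, y, comm'_gen_pow_inl, outerData_act, shift_iterate_gen, mul_inv_rev, inv_mul_cancel_right,
    ofAdd_neg, ← map_inv, incl_apply]

theorem sgen_x_y (k : ℕ) : sgen D.x D.y (k + 2) = D.incl (ofAdd (D.X ^ k)) := by
  induction k with
  | zero => rw [pow_zero, ← comm'_y_x]; rfl
  | succ k ih => rw [sgen, ih, comm'_incl_x, pow_succ']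

theorem tgenB_x_y (k : ℕ) : tgenB D.x D.y (k + 2) = D.incl (ofAdd (D.Y ^ k)) := by
  induction k with
  | zero => rw [pow_zero, ← comm'_y_x]; rfl
  | succ k ih => rw [tgenB, ih, comm'_incl_y, pow_succ']

variable {D} in
theorem incl_mem (hD : Subring.closure {D.X, D.Y} = ⊤) {H : Subgroup D.Total}
    (one_mem : comm' D.y D.x ∈ H) (comm'_x_mem : ∀ g ∈ H, comm' g D.x ∈ H)
    (comm'_y_mem : ∀ g ∈ H, comm' g D.y ∈ H) (a : Multiplicative R) : D.incl a ∈ H := by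
  have mul_mem (r : R) : ∀ b, D.incl (ofAdd b) ∈ H → D.incl (ofAdd (r * b)) ∈ H := by
    have hr : r ∈ Subring.closure {D.X, D.Y} := hD ▸ Subring.mem_top r
    induction hr using Subring.closure_induction with
    | mem r hr =>
      rcases hr with rfl | rfl <;> intro b hb
      · exact comm'_incl_x D b ▸ comm'_x_mem _ hb
      · exact comm'_incl_y D b ▸ comm'_y_mem _ hb
    | zero => simp
    | one => simp
    | add r s _ _ hr hs =>
      intro b hb
      rw [add_mul, ofAdd_add, map_mul]
      exact H.mul_mem (hr b hb) (hs b hb)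
    | neg r _ hr =>
      intro b hb
      rw [neg_mul, ofAdd_neg, map_inv]
      exact H.inv_mem (hr b hb)
    | mul r s _ _ hr hs =>
      intro b hb
      rw [mul_assoc]
      exact hr _ (hs b hb)
  simpa using mul_mem a.toAdd 1 (comm'_y_x D ▸ one_mem)

theorem closure_x_y (hD : Subring.closure {D.X, D.Y} = ⊤) :
    Subgroup.closure {D.x, D.y} = ⊤ := by
  have hx : D.x ∈ Subgroup.closure {D.x, D.y} := Subgroup.subset_closure (Set.mem_insert _ _)
  have hy : D.y ∈ Subgroup.closure {D.x, D.y} :=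
    Subgroup.subset_closure (Set.mem_insert_of_mem _ rfl)
  have hincl := incl_mem hD (comm'_mem hy hx) (fun _ hg => comm'_mem hg hx)
    (fun _ hg => comm'_mem hg hy)
  refine eq_top_iff.2 fun g _ => ?_
  obtain ⟨a, ha⟩ := D.exists_eq_mul g
  rw [ha]
  exact mul_mem (pow_mem hx _) (mul_mem (pow_mem hy _) (hincl _))

/-- The projection that forgets `R` and records the exponents of `x` and `y`. -/
def exponents : D.Total →* Multiplicative (ZMod n × ZMod m) :=
  lift D.innerExponent (ofAdd (1, 0))
    (fun b => by rw [outerData_act, innerExponent_shift, mul_comm])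
    (by simp [← ofAdd_nsmul, outerData_power])

theorem exponents_apply (g : D.Total) :
    D.exponents g = ofAdd (g.exponent, g.base.exponent) := by
  simp [exponents, innerExponent, lift_apply, ← ofAdd_nsmul, ← ofAdd_add]

theorem exponents_surjective : Function.Surjective D.exponents := fun t =>
  ⟨⟨t.toAdd.1, ⟨t.toAdd.2, 1⟩⟩, D.exponents_apply _⟩

theorem ker_exponents : D.exponents.ker = D.incl.range := by
  ext g
  rw [MonoidHom.mem_ker, exponents_apply]
  constructor
  · intro hg
    obtain ⟨a, ha⟩ := D.exists_eq_mul g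
    obtain ⟨hx, hy⟩ := Prod.mk.inj (show (g.exponent, g.base.exponent) = (0, 0) from hg)
    rw [hx, hy, ZMod.val_zero, ZMod.val_zero, pow_zero, pow_zero, one_mul, one_mul] at ha
    exact ⟨_, ha.symm⟩
  · rintro ⟨a, rfl⟩
    simp [incl_apply, inl_apply, CyclicExtension.ofNat]

theorem isMetabelian : IsMetabelian D.Total := by
  have hle : commutator D.Total ≤ D.incl.range :=
    D.ker_exponents ▸ Abelianization.commutator_subset_ker D.exponents
  rw [IsMetabelian, derivedSeries_succ, derivedSeries_one, eq_bot_iff]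
  refine (Subgroup.commutator_mono hle hle).trans (Subgroup.commutator_le.2 ?_)
  rintro _ ⟨a, rfl⟩ _ ⟨b, rfl⟩
  rw [Subgroup.mem_bot, ← map_commutatorElement,
    commutatorElement_eq_one_iff_mul_comm.2 (mul_comm a b), map_one]

theorem commutator_eq_ker_exponents (hD : Subring.closure {D.X, D.Y} = ⊤) :
    commutator D.Total = D.exponents.ker := by
  refine (Abelianization.commutator_subset_ker D.exponents).antisymm ?_
  rw [ker_exponents]
  rintro _ ⟨a, rfl⟩
  exact incl_mem hD (comm'_mem_commutator _ _) (fun _ _ => comm'_mem_commutator _ _)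
    (fun _ _ => comm'_mem_commutator _ _) a

/-- The isomorphism of the commutator quotient with `ℤ/n × ℤ/m`. -/
noncomputable def abelianizationEquiv (hD : Subring.closure {D.X, D.Y} = ⊤) :
    Abelianization D.Total ≃* Multiplicative (ZMod n × ZMod m) :=
  (QuotientGroup.quotientMulEquivOfEq (D.commutator_eq_ker_exponents hD)).trans
    (QuotientGroup.quotientKerEquivOfSurjective _ D.exponents_surjective)

end BicyclicData

/-- The order `ℤ[X, Y] / (X * Y, X ^ 2 - Y ^ 2 - 3)`, with basis `1`, `X`, `Y`, `X ^ 2`. -/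
@[ext] structure TrunkOrder where
  coeffOne : ℤ
  coeffX : ℤ
  coeffY : ℤ
  coeffXX : ℤ

namespace TrunkOrder

instance : Zero TrunkOrder := ⟨⟨0, 0, 0, 0⟩⟩

instance : One TrunkOrder := ⟨⟨1, 0, 0, 0⟩⟩

instance : Add TrunkOrder :=
  ⟨fun v w => ⟨v.coeffOne + w.coeffOne, v.coeffX + w.coeffX, v.coeffY + w.coeffY,
    v.coeffXX + w.coeffXX⟩⟩

instance : Neg TrunkOrder := ⟨fun v => ⟨-v.coeffOne, -v.coeffX, -v.coeffY, -v.coeffXX⟩⟩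

-- The reductions are `X * Y = 0`, `Y ^ 2 = X ^ 2 - 3`, `X ^ 3 = 3 * X` and `X ^ 2 * Y = 0`.
instance : Mul TrunkOrder :=
  ⟨fun v w =>
    ⟨v.coeffOne * w.coeffOne - 3 * (v.coeffY * w.coeffY),
      v.coeffOne * w.coeffX + v.coeffX * w.coeffOne +
        3 * (v.coeffX * w.coeffXX + v.coeffXX * w.coeffX),
      v.coeffOne * w.coeffY + v.coeffY * w.coeffOne,
      v.coeffOne * w.coeffXX + v.coeffXX * w.coeffOne + v.coeffX * w.coeffX +
        v.coeffY * w.coeffY + 3 * (v.coeffXX * w.coeffXX)⟩⟩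

theorem zero_def : (0 : TrunkOrder) = ⟨0, 0, 0, 0⟩ := rfl

theorem one_def : (1 : TrunkOrder) = ⟨1, 0, 0, 0⟩ := rfl

theorem add_def (v w : TrunkOrder) :
    v + w = ⟨v.coeffOne + w.coeffOne, v.coeffX + w.coeffX, v.coeffY + w.coeffY,
      v.coeffXX + w.coeffXX⟩ := rfl

theorem neg_def (v : TrunkOrder) :
    -v = ⟨-v.coeffOne, -v.coeffX, -v.coeffY, -v.coeffXX⟩ := rfl

theorem mul_def (v w : TrunkOrder) :
    v * w =
      ⟨v.coeffOne * w.coeffOne - 3 * (v.coeffY * w.coeffY),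
        v.coeffOne * w.coeffX + v.coeffX * w.coeffOne +
          3 * (v.coeffX * w.coeffXX + v.coeffXX * w.coeffX),
        v.coeffOne * w.coeffY + v.coeffY * w.coeffOne,
        v.coeffOne * w.coeffXX + v.coeffXX * w.coeffOne + v.coeffX * w.coeffX +
          v.coeffY * w.coeffY + 3 * (v.coeffXX * w.coeffXX)⟩ := rfl

instance : CommRing TrunkOrder where
  nsmul := nsmulRec
  zsmul := zsmulRec
  add_assoc _ _ _ := by ext <;> simp only [add_def, add_assoc]
  zero_add _ := by simp only [zero_def, add_def, zero_add]
  add_zero _ := by simp only [zero_def, add_def, add_zero]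
  add_comm _ _ := by ext <;> simp only [add_def, add_comm]
  neg_add_cancel _ := by simp only [zero_def, add_def, neg_def, neg_add_cancel]
  mul_assoc _ _ _ := by ext <;> simp only [mul_def] <;> ring
  one_mul _ := by ext <;> simp only [one_def, mul_def] <;> ring
  mul_one _ := by ext <;> simp only [one_def, mul_def] <;> ring
  left_distrib _ _ _ := by ext <;> simp only [add_def, mul_def] <;> ring
  right_distrib _ _ _ := by ext <;> simp only [add_def, mul_def] <;> ring
  zero_mul _ := by ext <;> simp only [zero_def, mul_def] <;> ring
  mul_zero _ := by ext <;> simp only [zero_def, mul_def] <;> ring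
  mul_comm _ _ := by ext <;> simp only [mul_def] <;> ring

/-- The generator `X`. -/
def X : TrunkOrder := ⟨0, 1, 0, 0⟩

/-- The generator `Y`. -/
def Y : TrunkOrder := ⟨0, 0, 1, 0⟩

theorem X_mul_Y : X * Y = 0 := rfl

theorem intCast_eq (k : ℤ) : (k : TrunkOrder) = ⟨k, 0, 0, 0⟩ := by
  induction k with
  | zero => rw [Int.cast_zero, zero_def]
  | succ k ih => push_cast at ih ⊢; simp [ih, add_def, one_def]
  | pred k ih => push_cast at ih ⊢; simp [sub_eq_add_neg, neg_def, ih, add_def, one_def]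

theorem three_mul_eq (w : TrunkOrder) :
    3 * w = ⟨3 * w.coeffOne, 3 * w.coeffX, 3 * w.coeffY, 3 * w.coeffXX⟩ := by
  have three_eq := intCast_eq 3
  rw [Int.cast_ofNat] at three_eq
  simp [three_eq, mul_def]

theorem X_sq : X ^ 2 = Y ^ 2 + 3 := by
  rw [← mul_one (3 : TrunkOrder), three_mul_eq, sq, sq]
  rfl

theorem eq_intCast_add (w : TrunkOrder) :
    w = w.coeffOne + w.coeffX * X + w.coeffY * Y + w.coeffXX * (X * X) := by
  simp [intCast_eq, X, Y, mul_def, add_def]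

theorem closure_X_Y : Subring.closure {X, Y} = ⊤ := by
  have hX : X ∈ Subring.closure {X, Y} := Subring.subset_closure (Set.mem_insert _ _)
  have hY : Y ∈ Subring.closure {X, Y} := Subring.subset_closure (Set.mem_insert_of_mem _ rfl)
  refine eq_top_iff.2 fun w _ => ?_
  rw [eq_intCast_add w]
  exact add_mem (add_mem (add_mem (intCast_mem _ _) (mul_mem (intCast_mem _ _) hX))
    (mul_mem (intCast_mem _ _) hY)) (mul_mem (intCast_mem _ _) (mul_mem hX hX))

theorem mem_span_three_mul_X_add_Y {w : TrunkOrder} :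
    w ∈ Ideal.span {3 * (X + Y)} ↔
      9 ∣ w.coeffOne ∧ 9 ∣ w.coeffX - w.coeffY ∧ 3 ∣ w.coeffY ∧ 3 ∣ w.coeffXX := by
  have multiple (a b c d : ℤ) :
      3 * (X + Y) * ⟨a, b, c, d⟩ = ⟨-9 * c, 3 * a + 9 * d, 3 * a, 3 * b + 3 * c⟩ := by
    rw [mul_assoc, three_mul_eq]
    simp only [X, Y, add_def, mul_def, mk.injEq]
    refine ⟨?_, ?_, ?_, ?_⟩ <;> ring
  rw [Ideal.mem_span_singleton']
  constructor
  · rintro ⟨⟨a, b, c, d⟩, rfl⟩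
    rw [mul_comm, multiple]
    refine ⟨⟨-c, ?_⟩, ⟨d, ?_⟩, ⟨a, ?_⟩, ⟨b + c, ?_⟩⟩ <;> ring
  · obtain ⟨a, b, c, d⟩ := w
    rintro ⟨⟨k, hk⟩, ⟨l, hl⟩, ⟨p, hp⟩, ⟨q, hq⟩⟩
    refine ⟨⟨p, q + k, -k, l⟩, ?_⟩
    rw [mul_comm, multiple]
    ext <;> dsimp only at * <;> lia

/-- The coordinates of an element modulo `3 * (X + Y)`. -/
def residue : TrunkOrder →+ ZMod 9 × ZMod 9 × ZMod 3 × ZMod 3 where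
  toFun w := (w.coeffOne, (w.coeffX - w.coeffY : ℤ), w.coeffY, w.coeffXX)
  map_zero' := rfl
  map_add' v w := by
    simp only [add_def, Int.cast_add, Int.cast_sub, Prod.mk_add_mk, Prod.mk.injEq, and_true,
      true_and]
    ring

theorem residue_apply (w : TrunkOrder) :
    residue w =
      ((w.coeffOne : ZMod 9), ((w.coeffX - w.coeffY : ℤ) : ZMod 9), (w.coeffY : ZMod 3),
        (w.coeffXX : ZMod 3)) := rfl

theorem residue_surjective : Function.Surjective residue := by
  rintro ⟨a, b, c, d⟩
  obtain ⟨a, rfl⟩ := ZMod.intCast_surjective a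
  obtain ⟨b, rfl⟩ := ZMod.intCast_surjective b
  obtain ⟨c, rfl⟩ := ZMod.intCast_surjective c
  obtain ⟨d, rfl⟩ := ZMod.intCast_surjective d
  refine ⟨⟨a, b + c, c, d⟩, ?_⟩
  rw [residue_apply, add_sub_cancel_right]

theorem ker_residue : residue.ker = (Ideal.span {3 * (X + Y)}).toAddSubgroup := by
  ext w
  rw [AddMonoidHom.mem_ker, Submodule.mem_toAddSubgroup, mem_span_three_mul_X_add_Y]
  simp only [residue_apply, Prod.mk_eq_zero, ZMod.intCast_zmod_eq_zero_iff_dvd, Nat.cast_ofNat]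

end TrunkOrder

/-- The quotient of `TrunkOrder` by `3 * (X + Y)`; as a module over it, the commutator subgroup of
`U` is free of rank one. -/
abbrev TrunkRing : Type := TrunkOrder ⧸ Ideal.span {3 * (TrunkOrder.X + TrunkOrder.Y)}

namespace TrunkRing

theorem card_eq : Nat.card TrunkRing = 3 ^ 6 := by
  rw [← Submodule.cardQuot_apply, Submodule.cardQuot, ← TrunkOrder.ker_residue,
    AddSubgroup.index_ker, AddMonoidHom.range_eq_top.2 TrunkOrder.residue_surjective,
    AddSubgroup.card_top]
  simp

/-- The image of `X`. -/
def X : TrunkRing := Ideal.Quotient.mk _ TrunkOrder.X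

/-- The image of `Y`. -/
def Y : TrunkRing := Ideal.Quotient.mk _ TrunkOrder.Y

theorem closure_X_Y : Subring.closure {X, Y} = ⊤ := by
  have h := RingHom.map_closure (Ideal.Quotient.mk (Ideal.span {3 * (TrunkOrder.X + TrunkOrder.Y)}))
    {TrunkOrder.X, TrunkOrder.Y}
  rw [TrunkOrder.closure_X_Y, Set.image_pair, ← RingHom.range_eq_map,
    RingHom.range_eq_top.2 Ideal.Quotient.mk_surjective] at h
  exact h.symm

theorem X_mul_Y : X * Y = 0 := by
  rw [X, Y, ← map_mul, TrunkOrder.X_mul_Y, map_zero]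

theorem X_sq : X ^ 2 = Y ^ 2 + 3 := by
  rw [X, Y, ← map_pow, TrunkOrder.X_sq, map_add, map_pow, map_ofNat]

theorem three_mul_X_add_Y : 3 * (X + Y) = 0 := by
  rw [X, Y, ← map_add, ← map_ofNat (Ideal.Quotient.mk _) 3, ← map_mul,
    Ideal.Quotient.mk_singleton_self]

theorem X_cube : X ^ 3 = 3 * X := by
  linear_combination X * X_sq + Y * X_mul_Y

theorem three_mul_X_sq : 3 * X ^ 2 = 0 := by
  linear_combination X * three_mul_X_add_Y - 3 * X_mul_Y

theorem three_mul_Y_sq : 3 * Y ^ 2 = 0 := by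
  linear_combination Y * three_mul_X_add_Y - 3 * X_mul_Y

theorem nine_eq_zero : (9 : TrunkRing) = 0 := by
  linear_combination three_mul_X_sq - three_mul_Y_sq - 3 * X_sq

theorem three_eq : (3 : TrunkRing) = X ^ 2 + 2 * Y ^ 2 := by
  linear_combination -X_sq - three_mul_Y_sq

theorem three_mul_Y : 3 * Y = 2 * X ^ 3 := by
  linear_combination three_mul_X_add_Y - 2 * X_cube - X * nine_eq_zero

theorem Y_cube : Y ^ 3 = X ^ 3 := by
  linear_combination X * X_mul_Y - Y * X_sq - three_mul_X_add_Y - X_cube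

theorem one_add_X_cube : (1 + X) ^ 3 = 1 - X ^ 3 := by
  linear_combination 2 * X_cube + three_mul_X_sq + X * nine_eq_zero

theorem one_sub_one_add_X_cube : 1 - (1 + X) ^ 3 = X ^ 3 := by
  rw [one_add_X_cube, sub_sub_cancel]

theorem geom_sum_three_one_add_X :
    ∑ i ∈ range 3, (1 + X) ^ i = -(X ^ 2 + Y ^ 2 + 2 * X ^ 3) := by
  simp only [sum_range_succ, sum_range_zero]
  linear_combination 2 * X_cube - X_sq + nine_eq_zero * X + three_mul_X_sq

theorem geom_sum_nine_one_add_X : ∑ i ∈ range 9, (1 + X) ^ i = 0 := calc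
  ∑ i ∈ range 9, (1 + X) ^ i
    = (1 + (1 + X) ^ 3 + ((1 + X) ^ 3) ^ 2) * (3 + 3 * X + X ^ 2) := by
      simp only [sum_range_succ, sum_range_zero]
      ring
  _ = (3 - 3 * X ^ 3 + X ^ 6) * (3 + 3 * X + X ^ 2) := by
      rw [one_add_X_cube]
      ring
  _ = 3 * (3 + 3 * X + X ^ 2) := by
      linear_combination (X ^ 3 * X_cube + (X ^ 2 - X) * three_mul_X_sq) * (3 + 3 * X + X ^ 2)
  _ = 0 := by linear_combination (1 + X) * nine_eq_zero + three_mul_X_sq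

/-- The data of the trunk group `U_{e+1}`; the value of `z` is the relation
`y ^ 3 = s₃ * s₄ ^ 2`. -/
def trunkData {e : ℕ} (he : 1 ≤ e) : BicyclicData TrunkRing 3 (3 ^ (e + 1)) where
  X := X
  Y := Y
  z := X + 2 * X ^ 2
  Y_mul_z := by linear_combination (1 + 2 * X) * X_mul_Y
  geom_sum_Y := by
    simp only [sum_range_succ, sum_range_zero]
    linear_combination three_mul_Y - X_sq
  geom_sum_X := zero_dvd_iff.1 <| geom_sum_nine_one_add_X ▸
    geom_sum_dvd_geom_sum (1 + X) (pow_dvd_pow 3 (Nat.succ_le_succ he))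

end TrunkRing

open TrunkRing in
theorem stmt17_general (e : ℕ) (he : 1 ≤ e) :
    ∃ (U : Type) (_ : Group U) (_ : Finite U) (x y : U),
      Subgroup.closure {x, y} = ⊤ ∧
      Nat.card U = 3 ^ (e + 8) ∧
      IsMetabelian U ∧
      x ^ 3 ^ (e + 1) = 1 ∧
      y ^ 3 = sgen x y 3 * sgen x y 4 ^ 2 ∧
      sgen x y 2 ^ 3 = sgen x y 4 * tgenB x y 4 ^ 2 ∧
      sgen x y 3 ^ 3 = sgen x y 5 ∧
      tgenB x y 3 ^ 3 = sgen x y 5 ^ 2 ∧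
      comm' (x ^ 3) y = sgen x y 4 * tgenB x y 4 * sgen x y 5 ^ 2 ∧
      comm' (x ^ 3) (sgen x y 2) = sgen x y 5 ∧
      tgenB x y 5 = sgen x y 5 ∧
      Nonempty (Abelianization U ≃* Multiplicative (ZMod (3 ^ (e + 1)) × ZMod 3)) := by
  let D := trunkData he
  have card : Nat.card D.Total = 3 ^ (e + 8) := by
    rw [D.card_total, TrunkRing.card_eq]
    ring
  refine ⟨D.Total, inferInstance, Nat.finite_of_card_ne_zero (by simp [card]), D.x, D.y,
    D.closure_x_y closure_X_Y, card, D.isMetabelian, D.x_pow, ?_, ?_, ?_, ?_, ?_, ?_, ?_,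
    ⟨D.abelianizationEquiv closure_X_Y⟩⟩
  all_goals
    simp only [D.y_pow, D.sgen_x_y, D.tgenB_x_y, D.comm'_x_pow_y, D.comm'_x_pow_incl, ← map_pow,
      ← map_mul, ← ofAdd_nsmul, ← ofAdd_add, nsmul_eq_mul, Nat.cast_ofNat, pow_zero, pow_one,
      mul_one]
    refine congrArg (fun r => D.incl (ofAdd r)) ?_
  exacts [rfl, three_eq, X_cube.symm, three_mul_Y, neg_eq_iff_eq_neg.2 geom_sum_three_one_add_X,
    one_sub_one_add_X_cube, Y_cube]

theorem stmt17 (e : ℕ) (he : 5 ≤ e) :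
    ∃ (U : Type) (_ : Group U) (_ : Finite U) (x y : U),
      Subgroup.closure {x, y} = ⊤ ∧
      Nat.card U = 3 ^ (e + 8) ∧
      IsMetabelian U ∧
      x ^ 3 ^ (e + 1) = 1 ∧
      y ^ 3 = sgen x y 3 * sgen x y 4 ^ 2 ∧
      sgen x y 2 ^ 3 = sgen x y 4 * tgenB x y 4 ^ 2 ∧
      sgen x y 3 ^ 3 = sgen x y 5 ∧
      tgenB x y 3 ^ 3 = sgen x y 5 ^ 2 ∧
      comm' (x ^ 3) y = sgen x y 4 * tgenB x y 4 * sgen x y 5 ^ 2 ∧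
      comm' (x ^ 3) (sgen x y 2) = sgen x y 5 ∧
      tgenB x y 5 = sgen x y 5 ∧
      Nonempty (Abelianization U ≃* Multiplicative (ZMod (3 ^ (e + 1)) × ZMod 3)) :=
  stmt17_general e (by lia)
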